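/- Let L be an odd integer divisible by 3 but not by 9. Suppose L has a prime factor p̂ such that p̂ is a safe prime with p̂ ≡ 7 (mod 8), p̂² does not divide L, and every prime factor of L other than 3 and p̂ is congruent to 5 modulo 8. Then M(L,3) = M^e(L,3) = (L − 1)/4. -/

import Mathlib

open Finset

/-- The set of differences of a codeword `I ⊆ ℤ_L`. -/
def dset {L : ℕ} (I : Finset (ZMod L)) : Finset (ZMod L) :=
  (I ×ˢ I).image fun p => p.1 - p.2

/-- The set of nonzero differences. -/
def dstar {L : ℕ} (I : Finset (ZMod L)) : Finset (ZMod L) := dset I \ {0}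

/-- A conflict-avoiding code of length `L` and weight `ω`. -/
def IsCAC (L ω : ℕ) (C : Finset (Finset (ZMod L))) : Prop :=
  (∀ I ∈ C, I.card = ω) ∧
  ∀ I ∈ C, ∀ J ∈ C, I ≠ J → Disjoint (dstar I) (dstar J)

/-- `M(L,ω)`: the maximum size of a CAC of length `L` and weight `ω`. -/
noncomputable def MCAC (L ω : ℕ) : ℕ :=
  sSup {n | ∃ C : Finset (Finset (ZMod L)), IsCAC L ω C ∧ C.card = n}

/-- An equi-difference codeword of weight three: `I = {0, g, 2g}` for some generator
`1 ≤ g ≤ L/2`. -/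
def IsEquiDiff {L : ℕ} (I : Finset (ZMod L)) : Prop :=
  ∃ g : ℕ, 1 ≤ g ∧ 2 * g ≤ L ∧ I = {0, (g : ZMod L), ((2 * g : ℕ) : ZMod L)}

/-- `M^e(L,ω)`: the maximum size of a CAC of length `L` and weight `ω` all of whose
codewords are equi-difference. -/
noncomputable def MeCAC (L ω : ℕ) : ℕ :=
  sSup {n | ∃ C : Finset (Finset (ZMod L)),
    IsCAC L ω C ∧ (∀ I ∈ C, IsEquiDiff I) ∧ C.card = n}

/-- The leave of a CAC `C` of length `L`: `Λ = ℤ_L \ ⋃_{I ∈ C} d(I)`. -/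
def leave {L : ℕ} (C : Finset (Finset (ZMod L))) : Set (ZMod L) :=
  Set.univ \ ⋃ I ∈ C, (dset I : Set (ZMod L))

/-!
A weight-three codeword of odd length has at least four nonzero differences, except for the cosets
of the subgroup of order three, which have the two elements of order three as their differences.
As the difference sets are disjoint, a code `C` satisfies `4 * #C ≤ L + 1`.

For the converse, choose a symmetric set `S` of nonzero residues such that `x ∈ S` and `2x ∈ S` only
if `2x = -x`, and take one codeword `{0, x, 2x}` for each pair `±x` in `S`; these are `#S / 2`
codewords. The set `S` is built separately among the residues of each additive order `d ∣ L`,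
which look like the units modulo `d`:

* if `d` has a divisor `m ≡ 5 (mod 8)`, then `(2 | m) = -1` and `(-1 | m) = 1`, so the units `x`
  with Jacobi symbol `(x | m) = 1` will do, and these are half of the units;
* if `d = 3`, then `2x = -x`, so both units will do, which is one more than half of the units;
* if `d = p` and `2` has odd order `(p - 1) / 2` modulo `p`, then the residues `± 4 ^ i` with
  `2 * i + 1 < (p - 1) / 2` will do, and these are one fewer than half of the units.

Altogether `#S = (L - 1) / 2`.
-/

section UpperBound

variable {L : ℕ} {I : Finset (ZMod L)} {C : Finset (Finset (ZMod L))}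

lemma mem_dstar {x : ZMod L} : x ∈ dstar I ↔ (∃ a ∈ I, ∃ b ∈ I, a - b = x) ∧ x ≠ 0 := by
  simp only [dstar, dset, mem_sdiff, mem_image, mem_product, mem_singleton, Prod.exists]
  grind

lemma sub_mem_dstar {a b : ZMod L} (ha : a ∈ I) (hb : b ∈ I) (hab : a ≠ b) : a - b ∈ dstar I :=
  mem_dstar.2 ⟨⟨a, ha, b, hb, rfl⟩, sub_ne_zero.2 hab⟩

lemma neg_mem_dstar {x : ZMod L} (hx : x ∈ dstar I) : -x ∈ dstar I := by
  obtain ⟨⟨a, ha, b, hb, rfl⟩, hab⟩ := mem_dstar.1 hx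
  rw [neg_sub]
  exact sub_mem_dstar hb ha (sub_ne_zero.1 hab).symm

lemma two_le_card_dstar_inter (hL : Odd L) {T : Finset (ZMod L)} {x : ZMod L}
    (hx : x ∈ dstar I) (hxT : x ∈ T) (hnT : -x ∈ T) : 2 ≤ #(dstar I ∩ T) :=
  one_lt_card.2 ⟨x, mem_inter.2 ⟨hx, hxT⟩, -x, mem_inter.2 ⟨neg_mem_dstar hx, hnT⟩,
    ZMod.ne_neg_self hL (mem_dstar.1 hx).2⟩

lemma four_le_card_dstar (hL : Odd L) {x y : ZMod L} (hx : x ∈ dstar I) (hy : y ∈ dstar I)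
    (hne : x ≠ y) (hneg : x ≠ -y) : 4 ≤ #(dstar I) := by
  have hsub : ({x, -x, y, -y} : Finset (ZMod L)) ⊆ dstar I := by
    simp [insert_subset_iff, hx, hy, neg_mem_dstar]
  have hxx : x ≠ -x := ZMod.ne_neg_self hL (mem_dstar.1 hx).2
  have hyy : y ≠ -y := ZMod.ne_neg_self hL (mem_dstar.1 hy).2
  have hcard : #({x, -x, y, -y} : Finset (ZMod L)) = 4 := by
    repeat rw [card_insert_of_notMem]
    · rfl
    all_goals simp [neg_eq_iff_eq_neg, *]
  exact hcard ▸ card_le_card hsub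

lemma IsCAC.sum_card_dstar_inter_add_one_le {ω : ℕ} (hC : IsCAC L ω C) {T : Finset (ZMod L)}
    (hT : 0 ∈ T) : ∑ I ∈ C, #(dstar I ∩ T) + 1 ≤ #T := by
  have hdisj : (C : Set (Finset (ZMod L))).PairwiseDisjoint fun I => dstar I ∩ T :=
    fun I hI J hJ hIJ => (hC.2 I hI J hJ hIJ).mono inter_subset_left inter_subset_left
  rw [← card_biUnion hdisj, ← card_erase_add_one hT]
  gcongr
  intro x hx
  obtain ⟨I, -, hxI⟩ := mem_biUnion.1 hx
  exact mem_erase.2 ⟨(mem_dstar.1 (mem_inter.1 hxI).1).2, (mem_inter.1 hxI).2⟩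

variable [NeZero L]

lemma four_le_card_dstar_add_card_inter_torsion (hL : Odd L) (hI : #I = 3) :
    4 ≤ #(dstar I) + #(dstar I ∩ ({x | 3 • x = 0} : Finset (ZMod L))) := by
  obtain ⟨a, b, c, hab, hac, hbc, rfl⟩ := card_eq_three.1 hI
  have hu : a - b ∈ dstar {a, b, c} := sub_mem_dstar (by simp) (by simp) hab
  have hv : b - c ∈ dstar {a, b, c} := sub_mem_dstar (by simp) (by simp) hbc
  have hw : a - c ∈ dstar {a, b, c} := sub_mem_dstar (by simp) (by simp) hac
  by_cases huv : a - b = b - c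
  · by_cases huw : a - b = -(a - c)
    · have htorsion : 3 • (a - b) = 0 := by linear_combination huw + huv
      have hinter : 2 ≤ #(dstar {a, b, c} ∩ ({x | 3 • x = 0} : Finset (ZMod L))) :=
        two_le_card_dstar_inter hL hu (by simpa using htorsion)
          (by rw [mem_filter_univ, neg_nsmul, htorsion, neg_zero])
      have hle := hinter.trans (card_le_card inter_subset_left)
      omega
    · have huw' : a - b ≠ a - c := fun h => hbc (sub_right_injective h)
      exact le_add_right (four_le_card_dstar hL hu hw huw' huw)
  · have huv' : a - b ≠ -(b - c) := fun h => hac (by linear_combination h)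
    exact le_add_right (four_le_card_dstar hL hu hv huv huv')

lemma IsCAC.four_mul_card_le (hL : Odd L) (hC : IsCAC L 3 C) : 4 * #C ≤ L + 1 := by
  have hall : ∑ I ∈ C, #(dstar I) + 1 ≤ L := by
    simpa using hC.sum_card_dstar_inter_add_one_le (mem_univ 0)
  have htorsion : ∑ I ∈ C, #(dstar I ∩ ({x | 3 • x = 0} : Finset (ZMod L))) + 1 ≤ 3 :=
    (hC.sum_card_dstar_inter_add_one_le (by simp)).trans
      (IsAddCyclic.card_nsmul_eq_zero_le three_pos)
  have hwords : ∑ _I ∈ C, 4 ≤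
      ∑ I ∈ C, (#(dstar I) + #(dstar I ∩ ({x | 3 • x = 0} : Finset (ZMod L)))) :=
    sum_le_sum fun I hI => four_le_card_dstar_add_card_inter_torsion hL (hC.1 I hI)
  rw [sum_const, smul_eq_mul, sum_add_distrib] at hwords
  omega

lemma MCAC_eq_card_and_MeCAC_eq_card (hL : Odd L) (hC : IsCAC L 3 C)
    (hequi : ∀ I ∈ C, IsEquiDiff I) (hcard : L < 4 * #C + 3) :
    MCAC L 3 = #C ∧ MeCAC L 3 = #C := by
  have hmax : ∀ D, IsCAC L 3 D → #D ≤ #C := fun D hD => by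
    have := hD.four_mul_card_le hL
    omega
  constructor
  · refine IsGreatest.csSup_eq ⟨⟨C, hC, rfl⟩, ?_⟩
    rintro _ ⟨D, hD, rfl⟩
    exact hmax D hD
  · refine IsGreatest.csSup_eq ⟨⟨C, hC, hequi, rfl⟩, ?_⟩
    rintro _ ⟨D, hD, -, rfl⟩
    exact hmax D hD

end UpperBound

/-- A symmetric set of nonzero elements that does not contain the double of any of its elements,
except where that double is the negative of the element (that is, for elements of order three).
Modulo an odd `L`, such sets are the sets `{± g | g a generator}` of equi-difference codes. -/
structure IsDoublingFree {A : Type*} [AddGroup A] (S : Finset A) : Prop where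
  zero_notMem : 0 ∉ S
  neg_mem : ∀ x ∈ S, -x ∈ S
  two_nsmul_eq_neg : ∀ x ∈ S, 2 • x ∈ S → 2 • x = -x

section Codewords

variable {L : ℕ} {S : Finset (ZMod L)}

/-- The equi-difference codeword `{0, x, 2x}` with generator `x`. -/
def equiDiffWord (x : ZMod L) : Finset (ZMod L) := {0, x, 2 • x}

lemma self_mem_dstar_equiDiffWord {x : ZMod L} (hx : x ≠ 0) : x ∈ dstar (equiDiffWord x) := by
  simpa using sub_mem_dstar (I := equiDiffWord x) (a := x) (b := 0)
    (by simp [equiDiffWord]) (by simp [equiDiffWord]) hx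

lemma exists_eq_or_eq_two_nsmul_of_mem_dstar {x z : ZMod L} (hz : z ∈ dstar (equiDiffWord x)) :
    ∃ y, (y = x ∨ y = -x) ∧ (z = y ∨ z = 2 • y) := by
  obtain ⟨⟨a, ha, b, hb, rfl⟩, hab⟩ := mem_dstar.1 hz
  simp only [equiDiffWord, mem_insert, mem_singleton] at ha hb
  simp only [exists_eq_or_imp, exists_eq_left]
  grind

lemma two_nsmul_injective (hL : Odd L) : Function.Injective fun x : ZMod L => 2 • x := by
  have htwo : IsUnit (2 : ZMod L) := by
    exact_mod_cast (ZMod.isUnit_iff_coprime 2 L).2 hL.coprime_two_left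
  simpa only [nsmul_eq_mul, Nat.cast_ofNat] using htwo.mul_right_injective

lemma card_equiDiffWord (hL : Odd L) {x : ZMod L} (hx : x ≠ 0) : #(equiDiffWord x) = 3 := by
  refine card_eq_three.2 ⟨0, x, 2 • x, hx.symm, fun h => hx ?_, ?_, rfl⟩
  · exact two_nsmul_injective hL (by simpa using h.symm)
  · exact fun h => hx (by rwa [two_nsmul, left_eq_add] at h)

lemma isEquiDiff_equiDiffWord [NeZero L] {x : ZMod L} (hx : x ≠ 0) (hle : 2 * x.val ≤ L) :
    IsEquiDiff (equiDiffWord x) :=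
  ⟨x.val, ZMod.val_pos.2 hx, hle, by simp [equiDiffWord]⟩

lemma IsDoublingFree.eq_or_eq_neg_of_not_disjoint (hL : Odd L) (hS : IsDoublingFree S)
    {x y : ZMod L} (hx : x ∈ S) (hy : y ∈ S)
    (hxy : ¬ Disjoint (dstar (equiDiffWord x)) (dstar (equiDiffWord y))) : x = y ∨ x = -y := by
  obtain ⟨z, hzx, hzy⟩ := not_disjoint_iff.1 hxy
  obtain ⟨x', hx', hzx'⟩ := exists_eq_or_eq_two_nsmul_of_mem_dstar hzx
  obtain ⟨y', hy', hzy'⟩ := exists_eq_or_eq_two_nsmul_of_mem_dstar hzy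
  have hx'S : x' ∈ S := by rcases hx' with rfl | rfl <;> simp [hx, hS.neg_mem]
  have hy'S : y' ∈ S := by rcases hy' with rfl | rfl <;> simp [hy, hS.neg_mem]
  have hxy' : x' = y' ∨ x' = -y' := by
    rcases hzx' with rfl | rfl <;> rcases hzy' with h | h
    · exact .inl h
    · exact .inr (h.trans (hS.two_nsmul_eq_neg y' hy'S (h ▸ hx'S)))
    · exact .inr (neg_eq_iff_eq_neg.1 ((hS.two_nsmul_eq_neg x' hx'S (h ▸ hy'S)).symm.trans h))
    · exact .inl (two_nsmul_injective hL h)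
  grind

variable [NeZero L]

lemma two_mul_val_neg_le_iff (hL : Odd L) {x : ZMod L} (hx : x ≠ 0) :
    2 * (-x).val ≤ L ↔ ¬ 2 * x.val ≤ L := by
  have hneg : (-x).val = L - x.val := by rw [ZMod.neg_val, if_neg hx]
  have hlt := x.val_lt
  obtain ⟨k, rfl⟩ := hL
  omega

lemma IsDoublingFree.two_mul_card_filter_val (hL : Odd L) (hS : IsDoublingFree S) :
    2 * #{x ∈ S | 2 * x.val ≤ L} = #S := by
  have hne : ∀ x ∈ S, x ≠ 0 := fun x hx => ne_of_mem_of_not_mem hx hS.zero_notMem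
  have hswap : #{x ∈ S | ¬ 2 * x.val ≤ L} = #{x ∈ S | 2 * x.val ≤ L} := by
    refine card_nbij' (-·) (-·) ?_ ?_ (fun _ _ => neg_neg _) (fun _ _ => neg_neg _)
    · intro x hx
      obtain ⟨hxS, hx⟩ := mem_filter.1 hx
      exact mem_filter.2 ⟨hS.neg_mem x hxS, (two_mul_val_neg_le_iff hL (hne x hxS)).2 hx⟩
    · intro x hx
      obtain ⟨hxS, hx⟩ := mem_filter.1 hx
      exact mem_filter.2
        ⟨hS.neg_mem x hxS, fun h => (two_mul_val_neg_le_iff hL (hne x hxS)).1 h hx⟩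
  rw [← card_filter_add_card_filter_not (s := S) fun x => 2 * x.val ≤ L, hswap, two_mul]

lemma IsDoublingFree.exists_isCAC (hL : Odd L) (hS : IsDoublingFree S) :
    ∃ C, IsCAC L 3 C ∧ (∀ I ∈ C, IsEquiDiff I) ∧ 2 * #C = #S := by
  let G : Finset (ZMod L) := {x ∈ S | 2 * x.val ≤ L}
  have hGS : ∀ x ∈ G, x ∈ S := fun x hx => (mem_filter.1 hx).1
  have hne : ∀ x ∈ G, x ≠ 0 := fun x hx => ne_of_mem_of_not_mem (hGS x hx) hS.zero_notMem
  have hdisj : ∀ x ∈ G, ∀ y ∈ G, x ≠ y →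
      Disjoint (dstar (equiDiffWord x)) (dstar (equiDiffWord y)) := by
    intro x hx y hy hxy
    by_contra hnd
    obtain rfl | rfl := hS.eq_or_eq_neg_of_not_disjoint hL (hGS x hx) (hGS y hy) hnd
    · exact hxy rfl
    · exact (two_mul_val_neg_le_iff hL (hne y hy)).1 (mem_filter.1 hx).2 (mem_filter.1 hy).2
  have hinj : Set.InjOn equiDiffWord (G : Set (ZMod L)) := by
    intro x hx y hy hxy
    by_contra hne'
    have hmem := self_mem_dstar_equiDiffWord (hne x hx)
    exact disjoint_left.1 (hdisj x hx y hy hne') hmem (hxy ▸ hmem)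
  refine ⟨G.image equiDiffWord, ⟨?_, ?_⟩, ?_, ?_⟩
  · exact forall_mem_image.2 fun x hx => card_equiDiffWord hL (hne x hx)
  · exact forall_mem_image.2 fun x hx => forall_mem_image.2 fun y hy hxy =>
      hdisj x hx y hy (ne_of_apply_ne _ hxy)
  · exact forall_mem_image.2 fun x hx => isEquiDiff_equiDiffWord (hne x hx) (mem_filter.1 hx).2
  · rw [card_image_of_injOn hinj, hS.two_mul_card_filter_val hL]

end Codewords

section Gluing

variable {A B : Type*} [AddGroup A] [AddGroup B]

lemma exists_injective_hom_zmod_addOrderOf (b : B) :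
    ∃ f : ZMod (addOrderOf b) →+ B, Function.Injective f := by
  refine ⟨ZMod.lift _ ⟨zmultiplesHom B b, by simp⟩, (ZMod.lift_injective _).2 fun m hm => ?_⟩
  exact (ZMod.intCast_zmod_eq_zero_iff_dvd m _).2 (addOrderOf_dvd_iff_zsmul_eq_zero.2 hm)

lemma IsDoublingFree.image [DecidableEq B] {S : Finset A} (hS : IsDoublingFree S) {f : A →+ B}
    (hf : Function.Injective f) : IsDoublingFree (S.image f) where
  zero_notMem := by simpa [hf.eq_iff' f.map_zero] using hS.zero_notMem
  neg_mem := forall_mem_image.2 fun x hx => mem_image.2 ⟨-x, hS.neg_mem x hx, f.map_neg x⟩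
  two_nsmul_eq_neg := forall_mem_image.2 fun x hx h => by
    rw [← map_nsmul, hf.mem_finset_image] at h
    rw [← map_nsmul, hS.two_nsmul_eq_neg x hx h, map_neg]

lemma IsDoublingFree.biUnion_addOrderOf [DecidableEq B] {D : Finset ℕ} (hD : ∀ d ∈ D, Odd d)
    {S : ℕ → Finset B} (hS : ∀ d ∈ D, IsDoublingFree (S d))
    (hord : ∀ d ∈ D, ∀ x ∈ S d, addOrderOf x = d) : IsDoublingFree (D.biUnion S) where
  zero_notMem := by simpa using fun d hd => (hS d hd).zero_notMem
  neg_mem x hx := by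
    obtain ⟨d, hd, hx⟩ := mem_biUnion.1 hx
    exact mem_biUnion.2 ⟨d, hd, (hS d hd).neg_mem x hx⟩
  two_nsmul_eq_neg x hx h2x := by
    obtain ⟨d, hd, hx⟩ := mem_biUnion.1 hx
    obtain ⟨e, he, h2x⟩ := mem_biUnion.1 h2x
    have hde : e = d := by
      have hcop : (addOrderOf x).Coprime 2 := (hord d hd x hx).symm ▸ (hD d hd).coprime_two_right
      rw [← hord e he _ h2x, hcop.addOrderOf_nsmul, hord d hd x hx]
    exact (hS d hd).two_nsmul_eq_neg x hx (hde ▸ h2x)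

lemma addOrderOf_eq_of_isUnit {d : ℕ} {x : ZMod d} (hx : IsUnit x) : addOrderOf x = d := by
  conv_rhs => rw [← ZMod.addOrderOf_one d]
  simpa using addOrderOf_injective (AddMonoidHom.mulLeft x) hx.mul_right_injective 1

/-- The ring `ZMod d` has a doubling-free set that consists of `n` units, that is, of elements of
additive order `d`. -/
def HasDoublingFreeUnits (d n : ℕ) : Prop :=
  ∃ S : Finset (ZMod d), IsDoublingFree S ∧ (∀ x ∈ S, IsUnit x) ∧ #S = n

lemma HasDoublingFreeUnits.exists_of_addOrderOf {n : ℕ} {b : B}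
    (h : HasDoublingFreeUnits (addOrderOf b) n) :
    ∃ S : Finset B, IsDoublingFree S ∧ (∀ x ∈ S, addOrderOf x = addOrderOf b) ∧ #S = n := by
  classical
  obtain ⟨S, hS, hunit, rfl⟩ := h
  obtain ⟨f, hf⟩ := exists_injective_hom_zmod_addOrderOf b
  refine ⟨S.image f, hS.image hf, forall_mem_image.2 fun x hx => ?_, card_image_of_injective _ hf⟩
  rw [addOrderOf_injective f hf, addOrderOf_eq_of_isUnit (hunit x hx)]

lemma exists_isDoublingFree_of_divisors {L : ℕ} (hL : Odd L) {n : ℕ → ℕ}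
    (h : ∀ d ∈ L.divisors, HasDoublingFreeUnits d (n d)) :
    ∃ S : Finset (ZMod L), IsDoublingFree S ∧ #S = ∑ d ∈ L.divisors, n d := by
  have hpiece : ∀ d ∈ L.divisors, ∃ S : Finset (ZMod L),
      IsDoublingFree S ∧ (∀ x ∈ S, addOrderOf x = d) ∧ #S = n d := by
    intro d hd
    have hdL := Nat.dvd_of_mem_divisors hd
    have hord : addOrderOf ((L / d : ℕ) : ZMod L) = d := by
      rw [ZMod.addOrderOf_coe _ hL.pos.ne', Nat.gcd_eq_right (Nat.div_dvd_of_dvd hdL),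
        Nat.div_div_self hdL hL.pos.ne']
    have hd' := h d hd
    rw [← hord] at hd'
    simpa only [hord] using hd'.exists_of_addOrderOf
  choose! S hS hord hcard using hpiece
  have hdisj : (L.divisors : Set ℕ).PairwiseDisjoint S := fun d hd e he hde =>
    disjoint_left.2 fun x hx hx' => hde ((hord d hd x hx).symm.trans (hord e he x hx'))
  refine ⟨L.divisors.biUnion S, .biUnion_addOrderOf ?_ hS hord, ?_⟩
  · exact fun d hd => hL.of_dvd_nat (Nat.dvd_of_mem_divisors hd)
  · rw [card_biUnion hdisj, sum_congr rfl hcard]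

lemma exists_isDoublingFree_of_totient_add {L : ℕ} (hL : Odd L) {e : ℕ → ℤ}
    (h : ∀ d ∈ L.divisors, ∃ n, HasDoublingFreeUnits d n ∧ (2 * n : ℤ) = d.totient + e d) :
    ∃ S : Finset (ZMod L), IsDoublingFree S ∧ (2 * #S : ℤ) = L + ∑ d ∈ L.divisors, e d := by
  choose! n hn hcard using h
  obtain ⟨S, hS, hScard⟩ := exists_isDoublingFree_of_divisors hL hn
  refine ⟨S, hS, ?_⟩
  calc (2 * #S : ℤ) = ∑ d ∈ L.divisors, (2 * n d : ℤ) := by rw [hScard, Nat.cast_sum, mul_sum]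
    _ = ∑ d ∈ L.divisors, (d.totient : ℤ) + ∑ d ∈ L.divisors, e d := by
        rw [sum_congr rfl hcard, sum_add_distrib]
    _ = L + ∑ d ∈ L.divisors, e d := by rw [← Nat.cast_sum, L.sum_totient]

end Gluing

section Units

open scoped Pointwise

variable {d m : ℕ}

lemma hasDoublingFreeUnits_zero : HasDoublingFreeUnits d 0 :=
  ⟨∅, ⟨by simp, by simp, by simp⟩, by simp, card_empty⟩

lemma hasDoublingFreeUnits_three : HasDoublingFreeUnits 3 2 :=
  ⟨{1, 2}, ⟨by decide, by decide, by decide⟩, by decide, rfl⟩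

lemma exists_hasDoublingFreeUnits_of_hom [NeZero d] (χ : (ZMod d)ˣ →* ℤˣ) (hneg : χ (-1) = 1)
    {u : (ZMod d)ˣ} (hu : (u : ZMod d) = 2) (hχu : χ u = -1) :
    ∃ n, HasDoublingFreeUnits d n ∧ 2 * n = d.totient := by
  have hhalf : 2 * #{v | χ v = 1} = d.totient := by
    have hfiber : #{v | χ v = 1} = #{v | χ v = -1} :=
      MonoidHom.card_fiber_eq_of_mem_range χ ⟨1, map_one χ⟩ ⟨u, hχu⟩
    have hnot : #{v | χ v ≠ 1} = #{v | χ v = -1} := by simp only [Int.units_ne_iff_eq_neg]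
    rw [← ZMod.card_units_eq_totient, ← card_univ,
      ← card_filter_add_card_filter_not (s := univ) fun v => χ v = 1, hnot, ← hfiber, two_mul]
  refine ⟨_, ⟨({v | χ v = 1} : Finset (ZMod d)ˣ).image Units.val, ⟨?_, ?_, ?_⟩, ?_,
    card_image_of_injective _ Units.val_injective⟩, hhalf⟩
  · intro h0
    obtain ⟨v, -, hv⟩ := mem_image.1 h0
    have hsub := subsingleton_of_zero_eq_one (isUnit_zero_iff.1 (hv ▸ v.isUnit))
    rw [Units.ext (Subsingleton.elim (u : ZMod d) (1 : (ZMod d)ˣ)), map_one] at hχu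
    exact absurd hχu (by decide)
  · refine forall_mem_image.2 fun v hv => mem_image.2 ⟨-v, ?_, Units.val_neg v⟩
    rw [mem_filter_univ] at hv ⊢
    rw [← neg_one_mul, map_mul, hneg, hv, one_mul]
  · refine forall_mem_image.2 fun v hv h2v => ?_
    have hval : 2 • (v : ZMod d) = ((u * v : (ZMod d)ˣ) : ZMod d) := by simp [hu]
    rw [hval, Units.val_injective.mem_finset_image, mem_filter_univ, map_mul, hχu,
      (mem_filter_univ v).1 hv] at h2v
    exact absurd h2v (by decide)
  · exact forall_mem_image.2 fun v _ => v.isUnit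

lemma jacobiSym_congr {a b : ℤ} (h : (a : ZMod m) = b) : jacobiSym a m = jacobiSym b m :=
  jacobiSym.mod_left' ((ZMod.intCast_eq_intCast_iff a b m).1 h)

/-- The Jacobi symbol `u ↦ (u | m)` as a character of the units modulo `m`. -/
def jacobiHom (m : ℕ) : (ZMod m)ˣ →* ℤˣ :=
  MonoidHom.toHomUnits
    { toFun u := jacobiSym (u : ZMod m).cast m
      map_one' := (jacobiSym_congr (by simp)).trans (jacobiSym.one_left m)
      map_mul' u v := (jacobiSym_congr (by simp)).trans (jacobiSym.mul_left _ _ m) }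

lemma coe_jacobiHom {u : (ZMod m)ˣ} {a : ℤ} (h : (u : ZMod m) = a) :
    (jacobiHom m u : ℤ) = jacobiSym a m :=
  jacobiSym_congr (by simpa using h)

lemma exists_hasDoublingFreeUnits_of_dvd (hd : Odd d) (hmd : m ∣ d) (hm : m % 8 = 5) :
    ∃ n, HasDoublingFreeUnits d n ∧ 2 * n = d.totient := by
  have : NeZero d := ⟨hd.pos.ne'⟩
  have hodd : Odd m := hd.of_dvd_nat hmd
  let u : (ZMod d)ˣ := ZMod.unitOfCoprime 2 hd.coprime_two_left
  refine exists_hasDoublingFreeUnits_of_hom ((jacobiHom m).comp (ZMod.unitsMap hmd)) ?_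
    (u := u) (by simp [u]) ?_
  · refine Units.ext ((coe_jacobiHom (a := -1) (by simp [ZMod.unitsMap_def])).trans ?_)
    rw [jacobiSym.at_neg_one hodd, ZMod.χ₄_nat_one_mod_four (by omega), Units.val_one]
  · refine Units.ext ((coe_jacobiHom (a := 2) ?_).trans ?_)
    · simpa [u, ZMod.unitsMap_def] using map_ofNat (ZMod.castHom hmd (ZMod m)) 2
    rw [jacobiSym.at_two hodd, ZMod.χ₈_nat_eq_if_mod_eight, if_neg (by omega), if_neg (by omega)]
    rfl

lemma isDoublingFree_union_neg {A : Type*} [AddGroup A] [DecidableEq A] {P : Finset A}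
    (h0 : 0 ∉ P) (hP : ∀ x ∈ P, ∀ y ∈ P, 2 • x ≠ y ∧ 2 • x ≠ -y) : IsDoublingFree (P ∪ -P) where
  zero_notMem := by simpa using h0
  neg_mem x hx := by simpa [or_comm] using hx
  two_nsmul_eq_neg x hx h2x := by
    simp only [mem_union, Finset.mem_neg'] at hx h2x
    exfalso
    rcases hx with hx | hx <;> rcases h2x with h2x | h2x
    · exact (hP _ hx _ h2x).1 rfl
    · exact (hP _ hx _ h2x).2 (neg_neg _).symm
    · exact (hP _ hx _ h2x).2 (neg_nsmul x 2)
    · exact (hP _ hx _ h2x).1 (neg_nsmul x 2)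

lemma two_pow_ne_neg_two_pow {R : Type*} [CommRing R] [Nontrivial R] (h : Odd (orderOf (2 : R)))
    (a b : ℕ) : (2 : R) ^ a ≠ -2 ^ b := by
  intro hab
  have hone : (1 : R) = -1 := by
    have := congrArg (· ^ orderOf (2 : R)) hab
    simpa [h.neg_pow, pow_right_comm _ _ (orderOf (2 : R)), pow_orderOf_eq_one] using this
  have hzero : (2 : R) = 0 := by linear_combination hone
  exact (orderOf_pos_iff.1 h.pos).isUnit.ne_zero hzero

lemma hasDoublingFreeUnits_of_odd_orderOf_two (hd : d ≠ 1) (h : Odd (orderOf (2 : ZMod d))) :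
    HasDoublingFreeUnits d (orderOf (2 : ZMod d) - 1) := by
  have : Nontrivial (ZMod d) := ZMod.nontrivial_iff.2 hd
  have hneg := two_pow_ne_neg_two_pow h
  have hzero : ∀ a, (2 : ZMod d) ^ a ≠ 0 := fun a ha => hneg a a (by simp [ha])
  obtain ⟨k, hk⟩ := h
  have hinj : ∀ a < 2 * k + 1, ∀ b < 2 * k + 1, (2 : ZMod d) ^ a = 2 ^ b → a = b := by
    rw [← hk]
    exact fun a ha b hb => pow_injOn_Iio_orderOf ha hb
  let P : Finset (ZMod d) := (range k).image fun i => 2 ^ (2 * i)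
  have hdouble : ∀ x ∈ P, ∀ y ∈ P, 2 • x ≠ y ∧ 2 • x ≠ -y := by
    refine forall_mem_image.2 fun i hi => forall_mem_image.2 fun j hj => ?_
    rw [mem_range] at hi hj
    rw [nsmul_eq_mul, Nat.cast_ofNat, ← pow_succ']
    exact ⟨fun h => by have := hinj _ (by omega) _ (by omega) h; omega, hneg _ _⟩
  have hdisj : Disjoint P (-P) := by
    refine disjoint_left.2 (forall_mem_image.2 fun i _ hi => ?_)
    obtain ⟨j, -, hj⟩ := mem_image.1 (Finset.mem_neg'.1 hi)
    exact hneg _ _ hj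
  have hcard : #P = k := by
    refine (card_image_of_injOn fun i hi j hj hij => ?_).trans (card_range k)
    rw [coe_range, Set.mem_Iio] at hi hj
    have := hinj _ (by omega) _ (by omega) hij
    omega
  have hunit : ∀ x ∈ P, IsUnit x := forall_mem_image.2 fun i _ =>
    (orderOf_pos_iff.1 (by omega)).isUnit.pow _
  refine ⟨P ∪ -P, isDoublingFree_union_neg (by simp [P, hzero]) hdouble, fun x hx => ?_, ?_⟩
  · rcases mem_union.1 hx with hx | hx
    · exact hunit x hx
    · simpa using hunit _ (Finset.mem_neg'.1 hx)
  · rw [card_union_of_disjoint hdisj, card_neg, hcard]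
    omega

end Units

lemma exists_isDoublingFree_two_mul_card_add_one {L p : ℕ} (hL : Odd L) (h3 : 3 ∣ L)
    (hp : p.Prime) (hpL : p ∣ L) (hp4 : p % 4 = 3) (hp3 : p ≠ 3)
    (hord : orderOf (2 : ZMod p) = (p - 1) / 2)
    (hdvd : ∀ d, d ∣ L → d ≠ 1 → d ≠ 3 → d ≠ p → ∃ m, m ∣ d ∧ m % 8 = 5) :
    ∃ S : Finset (ZMod L), IsDoublingFree S ∧ 2 * #S + 1 = L := by
  -- `e d` is the amount by which twice the number of units chosen modulo `d` exceeds `φ d`.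
  let e : ℕ → ℤ := Pi.single 1 (-1) + Pi.single 3 2 + Pi.single p (-2)
  have hpiece : ∀ d ∈ L.divisors,
      ∃ n, HasDoublingFreeUnits d n ∧ (2 * n : ℤ) = d.totient + e d := by
    intro d hd
    have hp1 := hp.ne_one
    rcases eq_or_ne d 1 with rfl | hd1
    · exact ⟨0, hasDoublingFreeUnits_zero, by simp [e, hp1.symm]⟩
    rcases eq_or_ne d 3 with rfl | hd3
    · exact ⟨2, hasDoublingFreeUnits_three, by
        simp [e, hp3.symm, Nat.totient_prime Nat.prime_three]⟩
    rcases eq_or_ne d p with rfl | hdp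
    · refine ⟨_, hasDoublingFreeUnits_of_odd_orderOf_two hd1 ?_, ?_⟩
      · rw [hord, Nat.odd_iff]
        omega
      · simp only [e, hord, Nat.totient_prime hp, Pi.add_apply, Pi.single_apply, if_neg hd1,
          if_neg hd3, if_true]
        omega
    · have hdL := Nat.dvd_of_mem_divisors hd
      obtain ⟨m, hmd, hm⟩ := hdvd d hdL hd1 hd3 hdp
      obtain ⟨n, hn, hcard⟩ := exists_hasDoublingFreeUnits_of_dvd (hL.of_dvd_nat hdL) hmd hm
      exact ⟨n, hn, by simpa [e, hd1, hd3, hdp] using mod_cast hcard⟩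
  have hsum : ∑ d ∈ L.divisors, e d = -1 := by
    simp [e, sum_add_distrib, sum_pi_single', h3, hpL, hL.pos.ne']
  obtain ⟨S, hS, hcard⟩ := exists_isDoublingFree_of_totient_add hL hpiece
  exact ⟨S, hS, by omega⟩

lemma exists_dvd_mod_eight_eq_five {L p d : ℕ} (h9 : ¬ 9 ∣ L) (hp7 : p % 8 = 7)
    (hsq : ¬ p ^ 2 ∣ L) (hL : ∀ q : ℕ, q.Prime → q ∣ L → q ≠ 3 → q ≠ p → q % 8 = 5)
    (hd : d ∣ L) (hd1 : d ≠ 1) (hd3 : d ≠ 3) (hdp : d ≠ p) : ∃ m, m ∣ d ∧ m % 8 = 5 := by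
  by_contra! hno
  have hprime : ∀ q, q.Prime → q ∣ d → q = 3 ∨ q = p := by
    intro q hq hqd
    by_contra! hne
    exact hno q hqd (hL q hq (hqd.trans hd) hne.1 hne.2)
  obtain ⟨q, hq, a, rfl⟩ := Nat.exists_prime_and_dvd hd1
  have ha1 : a ≠ 1 := by
    rintro rfl
    rcases hprime q hq (by simp) with rfl | rfl
    · exact hd3 rfl
    · exact hdp (mul_one _)
  obtain ⟨r, hr, hra⟩ := Nat.exists_prime_and_dvd ha1
  have hqr : q * r ∣ q * a := mul_dvd_mul_left q hra
  rcases hprime q hq (dvd_mul_right q a) with rfl | rfl <;>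
    rcases hprime r hr (hra.mul_left _) with rfl | rfl
  · exact h9 (hqr.trans hd)
  · exact hno _ hqr (by omega)
  · exact hno _ hqr (by omega)
  · exact hsq (by simpa only [sq] using hqr.trans hd)

lemma orderOf_two_of_safe_prime {p : ℕ} (hp : p.Prime) (hsafe : ((p - 1) / 2).Prime)
    (hp7 : p % 8 = 7) : orderOf (2 : ZMod p) = (p - 1) / 2 := by
  have := Fact.mk hp
  have := Fact.mk hsafe
  have htwo : (2 : ZMod p) ≠ 0 := by
    have := (ZMod.natCast_eq_zero_iff 2 p).not.2 (Nat.not_dvd_of_pos_of_lt two_pos (by omega))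
    exact_mod_cast this
  have hsquare : IsSquare (2 : ZMod p) := (ZMod.exists_sq_eq_two_iff (by omega)).2 (.inr hp7)
  refine orderOf_eq_prime ?_ fun h => ?_
  · rw [show (p - 1) / 2 = p / 2 by omega]
    exact (ZMod.euler_criterion p htwo).1 hsquare
  · exact one_ne_zero (α := ZMod p) (by linear_combination h)

theorem MCAC_div3_safe_prime_general (L p : ℕ) (hodd : Odd L) (h3 : 3 ∣ L) (h9 : ¬ 9 ∣ L)
    (hp : p.Prime) (hpL : p ∣ L) (hord : orderOf (2 : ZMod p) = (p - 1) / 2)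
    (hp7 : p % 8 = 7) (hsq : ¬ p ^ 2 ∣ L)
    (hL : ∀ q : ℕ, q.Prime → q ∣ L → q ≠ 3 → q ≠ p → q % 8 = 5) :
    MCAC L 3 = (L - 1) / 4 ∧ MeCAC L 3 = (L - 1) / 4 := by
  have : NeZero L := ⟨hodd.pos.ne'⟩
  obtain ⟨S, hS, hScard⟩ := exists_isDoublingFree_two_mul_card_add_one hodd h3 hp hpL
    (by omega) (by omega) hord fun d => exists_dvd_mod_eight_eq_five h9 hp7 hsq hL
  obtain ⟨C, hC, hequi, hCcard⟩ := hS.exists_isCAC hodd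
  have hcard : (L - 1) / 4 = #C := by omega
  rw [hcard]
  exact MCAC_eq_card_and_MeCAC_eq_card hodd hC hequi (by omega)

theorem MCAC_div3_safe_prime (L phat : ℕ) (hodd : Odd L) (h3 : 3 ∣ L) (h9 : ¬ 9 ∣ L)
    (hphat : phat.Prime) (hdvd : phat ∣ L) (hsafe : ((phat - 1) / 2).Prime)
    (hmod : phat % 8 = 7) (hsq : ¬ phat ^ 2 ∣ L)
    (hp : ∀ p : ℕ, p.Prime → p ∣ L → p ≠ 3 → p ≠ phat → p % 8 = 5) :
    MCAC L 3 = (L - 1) / 4 ∧ MeCAC L 3 = (L - 1) / 4 := by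
  exact MCAC_div3_safe_prime_general L phat hodd h3 h9 hphat hdvd
    (orderOf_two_of_safe_prime hphat hsafe hmod) hmod hsq hp
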